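/- Let n ≥ 2 and consider the following random input: a uniformly random permutation τ of [n] is drawn, and n items arrive sequentially where item j has value 1 for agents τ(j), τ(j+1), …, τ(n) and value 0 for agents τ(1), …, τ(j-1). An online (possibly randomized) algorithm allocates each item upon arrival, observing only the values of items seen so far. The offline optimal egalitarian social welfare is always 1, but the probability that the online algorithm achieves egalitarian welfare 1 is at most 1/n!. -/

import Mathlib

/-- Value of item `j` for agent `i` under permutation `τ`: item `j` is worth 1
to agents `τ(j), τ(j+1), …, τ(n)` and 0 to `τ(1), …, τ(j-1)`. -/
noncomputable def itemVal (n : ℕ) (τ : Equiv.Perm (Fin n)) (j i : Fin n) : ℝ :=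
  if j ≤ τ.symm i then 1 else 0

/-- Egalitarian social welfare of the allocation `B` (item `j` goes to agent `B j`). -/
noncomputable def egalWelfare (n : ℕ) (τ : Equiv.Perm (Fin n)) (B : Fin n → Fin n) : ℝ :=
  ⨅ i : Fin n, ∑ j : Fin n, if B j = i then itemVal n τ j i else 0

theorem stmt_10 (n : ℕ) (hn : 2 ≤ n) (A : Equiv.Perm (Fin n) → Fin n → Fin n)
    (honline : ∀ τ τ' : Equiv.Perm (Fin n), ∀ j : Fin n,
      (∀ j' : Fin n, j' < j → τ j' = τ' j') → A τ j = A τ' j) :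
    (∀ τ : Equiv.Perm (Fin n), egalWelfare n τ (fun j => τ j) = 1) ∧
      ((Nat.card {τ : Equiv.Perm (Fin n) // 1 ≤ egalWelfare n τ (A τ)} : ℝ) /
          (Nat.factorial n) ≤ 1 / (Nat.factorial n)) := by
  have key : ∀ τ : Equiv.Perm (Fin n), 1 ≤ egalWelfare n τ (A τ) → ∀ j, A τ j = τ j := by
    intro τ h
    have h1 : ∀ i, ∃ j, A τ j = i ∧ j ≤ τ.symm i := by
      intro i
      by_contra hc
      have hle : egalWelfare n τ (A τ) ≤
          ∑ j : Fin n, if A τ j = i then itemVal n τ j i else 0 :=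
        ciInf_le (Set.finite_range _).bddBelow i
      have h0 : (∑ j : Fin n, if A τ j = i then itemVal n τ j i else 0) = 0 := by
        apply Finset.sum_eq_zero
        intro j _
        by_cases hj : A τ j = i
        · have : ¬ j ≤ τ.symm i := fun h' => hc ⟨j, hj, h'⟩
          simp [hj, itemVal, this]
        · simp [hj]
      linarith
    have hsurj : Function.Surjective (A τ) := fun i => by
      obtain ⟨j, hj, _⟩ := h1 i
      exact ⟨j, hj⟩
    have hbij : Function.Bijective (A τ) := Finite.surjective_iff_bijective.mp hsurj
    have hle : ∀ j, j ≤ τ.symm (A τ j) := by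
      intro j
      obtain ⟨k, hk, hk'⟩ := h1 (A τ j)
      have := hbij.1 hk
      rwa [this] at hk'
    have hsum : ∑ j : Fin n, (j : ℕ) = ∑ j : Fin n, ((τ.symm (A τ j) : Fin n) : ℕ) :=
      (Function.Bijective.sum_comp (τ.symm.bijective.comp hbij) (fun j : Fin n => (j : ℕ))).symm
    have heq := (Finset.sum_eq_sum_iff_of_le (s := Finset.univ) (f := fun j : Fin n => (j : ℕ))
      (g := fun j : Fin n => ((τ.symm (A τ j) : Fin n) : ℕ)) (fun j _ => hle j)).1 hsum
    intro j
    have h2 : j = τ.symm (A τ j) := Fin.ext (heq j (Finset.mem_univ j))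
    exact ((Equiv.eq_symm_apply τ).1 h2).symm
  constructor
  · intro τ
    have : Nonempty (Fin n) := ⟨⟨0, by omega⟩⟩
    have h : ∀ i : Fin n, (∑ j : Fin n, if τ j = i then itemVal n τ j i else 0) = 1 := by
      intro i
      rw [Finset.sum_eq_single (τ.symm i)]
      · simp [itemVal]
      · intro j _ hj
        have : τ j ≠ i := fun h' => hj ((Equiv.eq_symm_apply τ).2 h')
        simp [this]
      · simp
    simp only [egalWelfare, h, ciInf_const]
  · have hs : Subsingleton {τ : Equiv.Perm (Fin n) // 1 ≤ egalWelfare n τ (A τ)} := by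
      refine ⟨fun ⟨τ, h⟩ ⟨τ', h'⟩ => ?_⟩
      have hall : ∀ m : ℕ, ∀ j : Fin n, (j : ℕ) = m → τ j = τ' j := by
        intro m
        induction m using Nat.strong_induction_on with
        | _ m ih =>
          intro j hj
          rw [← key τ h j, ← key τ' h' j]
          exact honline τ τ' j fun j' hj' => ih j' (hj ▸ hj') j' rfl
      exact Subtype.ext (Equiv.ext fun j => hall j j rfl)
    have hc : Nat.card {τ : Equiv.Perm (Fin n) // 1 ≤ egalWelfare n τ (A τ)} ≤ 1 :=
      Finite.card_le_one_iff_subsingleton.2 hs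
    gcongr
    exact_mod_cast hc
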